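/- Fix γ ∈ (1,2) and Φ_ℓ, Φ_r ∈ ℝ, and let Φ_ss be the unique weak solution of the stationary problem 𝕃^γ Φ_ss = 0 with boundary values Φ_ℓ at 0 and Φ_r at 1. If ρ ∈ H^{γ/2} and its continuous representative satisfies ρ(0) = Φ_ℓ and ρ(1) = Φ_r, then ‖ρ − Φ_ss‖²_{γ/2} − ⟨ρ − Φ_ss, ρ⟩_{γ/2} = 0. -/

import Mathlib

open MeasureTheory Filter ENNReal NNReal

noncomputable section

/-- The normalizing constant `c_γ = (∑_{z∈ℤ, z≠0} |z|^{-(1+γ)})⁻¹`. -/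
def cGamma (γ : ℝ) : ℝ := (∑' z : ℤ, if z = 0 then (0:ℝ) else |(z : ℝ)| ^ (-(1 + γ)))⁻¹

/-- The long-range kernel `p(z) = c_γ |z|^{-(1+γ)}` for `z ≠ 0`, `p(0) = 0`. -/
def pker (γ : ℝ) (z : ℝ) : ℝ := if z = 0 then 0 else cGamma γ * |z| ^ (-(1 + γ))

/-- The fractional inner product `⟨F,G⟩_{γ/2}`. -/
def fracInner (γ : ℝ) (F G : ℝ → ℝ) : ℝ :=
  (cGamma γ / 2) * ∫ u in Set.Icc (0:ℝ) 1, ∫ v in Set.Icc (0:ℝ) 1,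
    (F u - F v) * (G u - G v) * |u - v| ^ (-(1 + γ))

/-- The squared fractional seminorm `‖F‖²_{γ/2}`, as an extended real number. -/
def fracSeminormSq (γ : ℝ) (F : ℝ → ℝ) : ℝ≥0∞ :=
  ∫⁻ u in Set.Icc (0:ℝ) 1, ∫⁻ v in Set.Icc (0:ℝ) 1,
    ENNReal.ofReal ((cGamma γ / 2) * (F u - F v) ^ 2 * |u - v| ^ (-(1 + γ)))

/-- The squared `L²` norm on `[0,1]`, as an extended real number. -/
def l2NormSq (F : ℝ → ℝ) : ℝ≥0∞ :=
  ∫⁻ u in Set.Icc (0:ℝ) 1, ENNReal.ofReal ((F u) ^ 2)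

/-- The squared fractional Sobolev norm `‖F‖²_{H^{γ/2}}`. -/
def sobNormSq (γ : ℝ) (F : ℝ → ℝ) : ℝ≥0∞ := l2NormSq F + fracSeminormSq γ F

/-- Membership in the fractional Sobolev space `H^{γ/2}`. -/
def MemHgamma (γ : ℝ) (F : ℝ → ℝ) : Prop := Measurable F ∧ sobNormSq γ F < ⊤

/-- `F` admits a continuous representative on `[0,1]` taking the values `a` at `0` and
`b` at `1`. -/
def HasBoundaryValues (F : ℝ → ℝ) (a b : ℝ) : Prop :=
  ∃ Fc : ℝ → ℝ, ContinuousOn Fc (Set.Icc 0 1) ∧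
    (∀ᵐ u ∂(volume.restrict (Set.Icc (0:ℝ) 1)), F u = Fc u) ∧ Fc 0 = a ∧ Fc 1 = b

/-- The regional fractional Laplacian on `[0,1]`, as a principal-value limit. -/
def HasFracLapAt (γ : ℝ) (F : ℝ → ℝ) (u L : ℝ) : Prop :=
  Tendsto (fun ε : ℝ =>
      cGamma γ * ∫ v in {v : ℝ | v ∈ Set.Icc (0:ℝ) 1 ∧ ε ≤ abs (u - v)},
        (F v - F u) * |v - u| ^ (-(1 + γ)))
    (nhdsWithin (0:ℝ) (Set.Ioi 0)) (nhds L)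

/-- The regional fractional Laplacian `𝕃^γ F(u)` (junk value `0` when the
principal-value limit does not exist). -/
def fracLap (γ : ℝ) (F : ℝ → ℝ) (u : ℝ) : ℝ :=
  open Classical in
  if h : ∃ L, HasFracLapAt γ F u L then h.choose else 0

/-- Smooth real functions with compact support contained in `(0,1)`. -/
def IsSpatialTest (G : ℝ → ℝ) : Prop :=
  ContDiff ℝ (⊤ : ℕ∞) G ∧ ∃ K : Set ℝ, IsCompact K ∧ K ⊆ Set.Ioo 0 1 ∧ Function.support G ⊆ K

/-- Test functions `C¹` in time and `C^∞` in space, with spatial supports contained in a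
fixed compact subset of `(0,1)`. -/
def IsTestCInf (G : ℝ → ℝ → ℝ) : Prop :=
  (∀ u, ContDiff ℝ 1 fun t => G t u) ∧ (∀ t, ContDiff ℝ (⊤ : ℕ∞) fun u => G t u) ∧
  ∃ K : Set ℝ, IsCompact K ∧ K ⊆ Set.Ioo 0 1 ∧ ∀ t, Function.support (G t) ⊆ K

/-- Functions `C¹` in time and `C²` in space, with spatial supports contained in a fixed
compact subset of `(0,1)`. -/
def IsTestC2 (G : ℝ → ℝ → ℝ) : Prop :=
  (∀ u, ContDiff ℝ 1 fun t => G t u) ∧ (∀ t, ContDiff ℝ 2 fun u => G t u) ∧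
  ∃ K : Set ℝ, IsCompact K ∧ K ⊆ Set.Ioo 0 1 ∧ ∀ t, Function.support (G t) ⊆ K

/-- Weak solution of the stationary problem `𝕃^γ Φss = 0` on `[0,1]` with Dirichlet
boundary values `Φl` at `0` and `Φr` at `1`. -/
def IsStationarySolution (γ Φl Φr : ℝ) (Φss : ℝ → ℝ) : Prop :=
  MemHgamma γ Φss ∧ HasBoundaryValues Φss Φl Φr ∧
  ∀ G : ℝ → ℝ, IsSpatialTest G → (∫ u in Set.Icc (0:ℝ) 1, Φss u * fracLap γ G u) = 0

/-!
The difference of the two terms is `-⟨w, Φss⟩_{γ/2}` with `w = ρ - Φss`, so it has to be shown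
that a weak solution is orthogonal to every `w` of finite energy whose continuous representative
vanishes at `0` and `1`.

Against a test function `G` this is integration by parts, `⟨Φ, G⟩_{γ/2} = -∫ Φ 𝕃^γ G`: away from
the diagonal it is the symmetry of the kernel, and the singularity on the diagonal is integrable
once the linear Taylor term of `G`, which has principal value zero, is subtracted.

It remains to approximate `w` by test functions in the energy. Soft thresholding `w` by `δ` gives
continuous functions with compact support in `(0,1)` whose weighted differences are dominated by
those of `w`, so dominated convergence applies. A continuous function with compact support in
`(0,1)` is mollified: convolution commutes with weighted differences when `ℝ` acts diagonally on
`ℝ²`, and translations act continuously on `L²(ℝ²)`.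
-/

open scoped Topology

/-! ### Weighted differences -/

/-- Lebesgue measure on the unit interval. -/
abbrev unitMeasure : Measure ℝ := volume.restrict (Set.Icc 0 1)

/-- Lebesgue measure on the unit square, on which the double integral of `fracInner` lives. -/
abbrev squareMeasure : Measure (ℝ × ℝ) := unitMeasure.prod unitMeasure

/-- The weighted difference `(F u - F v) |u - v|^{-(1+γ)/2}`: the kernel is split evenly between
the two factors, so that `fracInner` is an `L²(squareMeasure)` pairing of two of these. -/
def fracDiff (γ : ℝ) (F : ℝ → ℝ) (p : ℝ × ℝ) : ℝ :=
  (F p.1 - F p.2) * |p.1 - p.2| ^ (-(1 + γ) / 2)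

lemma squareMeasure_eq_restrict :
    squareMeasure = volume.restrict (Set.Icc (0 : ℝ) 1 ×ˢ Set.Icc (0 : ℝ) 1) :=
  Measure.prod_restrict _ _

lemma cGamma_pos {γ : ℝ} (hγ : 0 < γ) : 0 < cGamma γ := by
  have h_term (z : ℤ) : (if z = 0 then 0 else |(z : ℝ)| ^ (-(1 + γ))) = |(z : ℝ)| ^ (-(1 + γ)) := by
    split_ifs with hz
    · rw [hz, Int.cast_zero, abs_zero, Real.zero_rpow (by linarith)]
    · rfl
  simp only [cGamma, h_term]
  refine inv_pos.mpr ((Real.summable_abs_int_rpow (by linarith)).tsum_pos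
    (fun z ↦ by positivity) 1 (by simp))

lemma fracDiff_mul_fracDiff (γ : ℝ) (F G : ℝ → ℝ) (p : ℝ × ℝ) :
    fracDiff γ F p * fracDiff γ G p =
      (F p.1 - F p.2) * (G p.1 - G p.2) * |p.1 - p.2| ^ (-(1 + γ)) := by
  have h_sq : |p.1 - p.2| ^ (-(1 + γ)) =
      |p.1 - p.2| ^ (-(1 + γ) / 2) * |p.1 - p.2| ^ (-(1 + γ) / 2) := by
    rw [← sq, ← Real.rpow_mul_natCast (abs_nonneg _)]
    norm_num
  rw [h_sq, fracDiff, fracDiff]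
  ring

lemma fracDiff_sub (γ : ℝ) (F G : ℝ → ℝ) :
    fracDiff γ (fun u ↦ F u - G u) = fracDiff γ F - fracDiff γ G := by
  funext p
  simp only [fracDiff, Pi.sub_apply]
  ring

lemma measurable_fracDiff (γ : ℝ) {F : ℝ → ℝ} (hF : Measurable F) : Measurable (fracDiff γ F) := by
  unfold fracDiff
  fun_prop

lemma fracDiff_congr_ae (γ : ℝ) {F G : ℝ → ℝ} (h : F =ᵐ[unitMeasure] G) :
    fracDiff γ F =ᵐ[squareMeasure] fracDiff γ G := by
  filter_upwards [Measure.quasiMeasurePreserving_fst.ae_eq_comp h,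
    Measure.quasiMeasurePreserving_snd.ae_eq_comp h] with p h₁ h₂
  simp only [Function.comp_apply] at h₁ h₂
  rw [fracDiff, fracDiff, h₁, h₂]

lemma fracInner_eq_integral {γ : ℝ} {F G : ℝ → ℝ} (hF : MemLp (fracDiff γ F) 2 squareMeasure)
    (hG : MemLp (fracDiff γ G) 2 squareMeasure) :
    fracInner γ F G = cGamma γ / 2 * ∫ p, fracDiff γ F p * fracDiff γ G p ∂squareMeasure := by
  rw [integral_prod (fun p ↦ fracDiff γ F p * fracDiff γ G p) (hF.integrable_mul hG)]
  simp only [fracDiff_mul_fracDiff, fracInner]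

lemma fracInner_sub_right {γ : ℝ} {w F G : ℝ → ℝ} (hw : MemLp (fracDiff γ w) 2 squareMeasure)
    (hF : MemLp (fracDiff γ F) 2 squareMeasure) (hG : MemLp (fracDiff γ G) 2 squareMeasure) :
    fracInner γ w (fun u ↦ F u - G u) = fracInner γ w F - fracInner γ w G := by
  have hFG : MemLp (fracDiff γ fun u ↦ F u - G u) 2 squareMeasure := fracDiff_sub γ F G ▸ hF.sub hG
  rw [fracInner_eq_integral hw hFG, fracInner_eq_integral hw hF, fracInner_eq_integral hw hG,
    ← mul_sub]
  simp only [fracDiff_sub, Pi.sub_apply, mul_sub (fracDiff γ w _)]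
  exact congrArg _ (integral_sub (hw.integrable_mul hF) (hw.integrable_mul hG))

lemma MemHgamma.memLp_fracDiff {γ : ℝ} (hγ : 0 < γ) {F : ℝ → ℝ} (hF : MemHgamma γ F) :
    MemLp (fracDiff γ F) 2 squareMeasure := by
  have h_meas : Measurable (fracDiff γ F) := measurable_fracDiff γ hF.1
  have h_seminorm : fracSeminormSq γ F =
      ENNReal.ofReal (cGamma γ / 2) * ∫⁻ p, ENNReal.ofReal (fracDiff γ F p ^ 2) ∂squareMeasure := by
    rw [← lintegral_const_mul _ (by fun_prop), lintegral_prod _ (by fun_prop), fracSeminormSq]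
    simp only [← ENNReal.ofReal_mul (half_pos (cGamma_pos hγ)).le, sq, fracDiff_mul_fracDiff,
      mul_assoc]
  have h_energy : ∫⁻ p, ENNReal.ofReal (fracDiff γ F p ^ 2) ∂squareMeasure < ⊤ := by
    refine ENNReal.lt_top_of_mul_ne_top_right
      (h_seminorm ▸ (le_add_self.trans_lt hF.2).ne) (ENNReal.ofReal_pos.mpr ?_).ne'
    exact half_pos (cGamma_pos hγ)
  rw [memLp_two_iff_integrable_sq h_meas.aestronglyMeasurable]
  exact (lintegral_ofReal_ne_top_iff_integrable (by fun_prop) (ae_of_all _ fun p ↦ sq_nonneg _)).mp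
    h_energy.ne

lemma MemHgamma.integrable {γ : ℝ} {F : ℝ → ℝ} (hF : MemHgamma γ F) : Integrable F unitMeasure := by
  have h_sq : Integrable (fun u ↦ F u ^ 2) unitMeasure :=
    (lintegral_ofReal_ne_top_iff_integrable (hF.1.pow_const 2).aestronglyMeasurable
      (ae_of_all _ fun u ↦ sq_nonneg _)).mp (le_self_add.trans_lt hF.2).ne
  exact ((memLp_two_iff_integrable_sq hF.1.aestronglyMeasurable).mpr h_sq).integrable one_le_two

lemma HasBoundaryValues.sub {F G : ℝ → ℝ} {a b c d : ℝ} (hF : HasBoundaryValues F a b)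
    (hG : HasBoundaryValues G c d) : HasBoundaryValues (fun u ↦ F u - G u) (a - c) (b - d) := by
  obtain ⟨F', hF'_cont, hF'_ae, rfl, rfl⟩ := hF
  obtain ⟨G', hG'_cont, hG'_ae, rfl, rfl⟩ := hG
  refine ⟨fun u ↦ F' u - G' u, hF'_cont.sub hG'_cont, ?_, rfl, rfl⟩
  filter_upwards [hF'_ae, hG'_ae] with u hFu hGu
  rw [hFu, hGu]

/-! ### Truncation away from the diagonal -/

/-- The pairs at distance at least `ε`, to which the principal value restricts the singular
kernel. -/
def awayFromDiagonal (ε : ℝ) : Set (ℝ × ℝ) := {p | ε ≤ |p.1 - p.2|}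

lemma measurableSet_awayFromDiagonal (ε : ℝ) : MeasurableSet (awayFromDiagonal ε) :=
  measurableSet_le measurable_const (by fun_prop)

lemma aecover_setOf_le_abs {α : Type*} [MeasurableSpace α] {μ : Measure α} {t : α → ℝ}
    (ht : Measurable t) (ht_ne : ∀ᵐ x ∂μ, t x ≠ 0) :
    AECover μ (𝓝[>] 0) fun ε : ℝ ↦ {x | ε ≤ |t x|} where
  ae_eventually_mem := by
    filter_upwards [ht_ne] with x hx
    filter_upwards [Ioo_mem_nhdsGT (abs_pos.mpr hx)] with ε hε using hε.2.le
  measurableSet _ := measurableSet_le measurable_const (by fun_prop)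

lemma ae_fst_ne_snd {α : Type*} [MeasurableSpace α] [MeasurableEq α] (μ ν : Measure α)
    [SFinite μ] [SFinite ν] [NullSingletonClass ν] : ∀ᵐ p ∂μ.prod ν, p.1 ≠ p.2 := by
  refine (Measure.ae_prod_iff_ae_ae measurableSet_diagonal.compl).mpr (ae_of_all _ fun x ↦ ?_)
  filter_upwards [measure_eq_zero_iff_ae_notMem.mp (measure_singleton (μ := ν) x)] with y hy
  exact Ne.symm hy

lemma setIntegral_prod_eq_integral_section {α β E : Type*} [MeasurableSpace α] [MeasurableSpace β]
    [NormedAddCommGroup E] [NormedSpace ℝ E] {μ : Measure α} {ν : Measure β} [SFinite μ]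
    [SFinite ν] {s : Set (α × β)} (hs : MeasurableSet s) {f : α × β → E}
    (hf : IntegrableOn f s (μ.prod ν)) :
    ∫ p in s, f p ∂μ.prod ν = ∫ x, ∫ y in Prod.mk x ⁻¹' s, f (x, y) ∂ν ∂μ := by
  rw [← integral_indicator hs, integral_prod _ ((integrable_indicator_iff hs).mpr hf)]
  refine integral_congr_ae (ae_of_all _ fun x ↦ ?_)
  exact integral_indicator (f := fun y ↦ f (x, y)) (measurable_prodMk_left hs)

/-- Exchanging the two variables identifies the contributions of `Φ p.1` and `Φ p.2`. -/
lemma integral_sub_mul_sub_mul_of_swap {α : Type*} [MeasurableSpace α] {ν : Measure (α × α)}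
    (hν : MeasurePreserving Prod.swap ν ν) {Φ G : α → ℝ} {k : α × α → ℝ}
    (hk : ∀ p, k p.swap = k p)
    (h_int : Integrable (fun p ↦ Φ p.1 * ((G p.2 - G p.1) * k p)) ν) :
    ∫ p, (Φ p.1 - Φ p.2) * (G p.1 - G p.2) * k p ∂ν =
      -2 * ∫ p, Φ p.1 * ((G p.2 - G p.1) * k p) ∂ν := by
  set f : α × α → ℝ := fun p ↦ Φ p.1 * ((G p.2 - G p.1) * k p) with hf
  have h_swap : ∫ p, f p.swap ∂ν = ∫ p, f p ∂ν :=
    hν.integral_comp MeasurableEquiv.prodComm.measurableEmbedding f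
  have h_split (p : α × α) : (Φ p.1 - Φ p.2) * (G p.1 - G p.2) * k p = -(f p + f p.swap) := by
    simp only [hf, hk, Prod.fst_swap, Prod.snd_swap]
    ring
  simp only [h_split]
  have h_add : ∫ p, f p + f p.swap ∂ν = ∫ p, f p ∂ν + ∫ p, f p.swap ∂ν :=
    integral_add h_int (hν.integrable_comp_of_integrable h_int)
  rw [integral_neg, h_add, h_swap]
  ring

lemma measurePreserving_swap_restrict_awayFromDiagonal (ε : ℝ) :
    MeasurePreserving Prod.swap (squareMeasure.restrict (awayFromDiagonal ε))
      (squareMeasure.restrict (awayFromDiagonal ε)) := by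
  have h_swap : MeasurePreserving Prod.swap squareMeasure squareMeasure :=
    Measure.measurePreserving_swap
  have h_preimage : Prod.swap ⁻¹' awayFromDiagonal ε = awayFromDiagonal ε := by
    ext p
    simp [awayFromDiagonal, abs_sub_comm]
  simpa only [h_preimage] using h_swap.restrict_preimage (measurableSet_awayFromDiagonal ε)

lemma integrableOn_abs_rpow {s : ℝ} (hs : -1 < s) :
    IntegrableOn (fun t : ℝ ↦ |t| ^ s) (Set.Icc (-1) 1) := by
  have h_loc : LocallyIntegrable (fun t : ℝ ↦ |t| ^ s) :=
    locallyIntegrable_of_norm_le_rpow (C := 1) (α := -s) (by simp)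
      (by rw [Module.finrank_self, Nat.cast_one]; linarith)
      (ae_of_all _ fun t ↦ by simp [abs_of_nonneg (Real.rpow_nonneg (abs_nonneg t) s)])
      (measurable_id.abs.pow_const s).aestronglyMeasurable
  exact h_loc.integrableOn_isCompact isCompact_Icc

lemma sub_mem_Icc_neg_one_one {u v : ℝ} (hu : u ∈ Set.Icc (0 : ℝ) 1) (hv : v ∈ Set.Icc (0 : ℝ) 1) :
    u - v ∈ Set.Icc (-1 : ℝ) 1 := ⟨by linarith [hu.1, hv.2], by linarith [hu.2, hv.1]⟩

lemma integrable_abs_sub_rpow {s : ℝ} (hs : -1 < s) {u : ℝ} (hu : u ∈ Set.Icc (0 : ℝ) 1) :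
    Integrable (fun v ↦ |u - v| ^ s) unitMeasure := by
  have h_kernel := ((integrable_indicator_iff measurableSet_Icc).mpr
    (integrableOn_abs_rpow hs)).comp_sub_left u
  exact h_kernel.integrableOn.congr_fun
    (fun v hv ↦ Set.indicator_of_mem (sub_mem_Icc_neg_one_one hu hv) _) measurableSet_Icc

lemma integrable_mul_abs_sub_rpow {s : ℝ} (hs : -1 < s) {Φ : ℝ → ℝ}
    (hΦ : Integrable Φ unitMeasure) :
    Integrable (fun p : ℝ × ℝ ↦ Φ p.1 * |p.1 - p.2| ^ s) squareMeasure := by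
  have h_kernel := (integrable_indicator_iff measurableSet_Icc).mpr (integrableOn_abs_rpow hs)
  have h_conv := (((integrable_indicator_iff measurableSet_Icc).mpr hΦ).convolution_integrand
    (ContinuousLinearMap.mul ℝ ℝ) h_kernel).swap
  rw [squareMeasure_eq_restrict]
  refine h_conv.integrableOn.congr_fun (fun p hp ↦ ?_) (measurableSet_Icc.prod measurableSet_Icc)
  simp only [Function.comp_apply, Prod.fst_swap, Prod.snd_swap, ContinuousLinearMap.mul_apply',
    Set.indicator_of_mem hp.1, Set.indicator_of_mem (sub_mem_Icc_neg_one_one hp.2 hp.1),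
    abs_sub_comm p.2 p.1]

lemma abs_mul_abs_rpow_le {x C t : ℝ} (hC : 0 ≤ C) (hx : |x| ≤ C * t ^ 2) (s : ℝ) :
    |x * |t| ^ s| ≤ C * |t| ^ (2 + s) := by
  rcases eq_or_ne t 0 with rfl | ht
  · have hx_zero : x = 0 := by simpa using hx
    rw [hx_zero, zero_mul, abs_zero]
    positivity
  · rw [abs_mul, abs_of_nonneg (Real.rpow_nonneg (abs_nonneg t) s),
      Real.rpow_add (abs_pos.mpr ht), Real.rpow_two, sq_abs, ← mul_assoc]
    gcongr

lemma memLp_fracDiff_of_lipschitzWith {γ : ℝ} (hγ : γ < 2) {L : ℝ≥0} {G : ℝ → ℝ}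
    (hG : LipschitzWith L G) : MemLp (fracDiff γ G) 2 squareMeasure := by
  have h_meas := measurable_fracDiff γ hG.continuous.measurable
  rw [memLp_two_iff_integrable_sq h_meas.aestronglyMeasurable]
  refine Integrable.mono' (integrable_mul_abs_sub_rpow (s := 2 + -(1 + γ)) (by linarith)
    (integrable_const ((L : ℝ) ^ 2))) (by fun_prop) (ae_of_all _ fun p ↦ ?_)
  rw [Real.norm_eq_abs, sq, fracDiff_mul_fracDiff]
  refine abs_mul_abs_rpow_le (sq_nonneg _) ?_ _
  rw [← sq, abs_sq, ← sq_abs, ← sq_abs (p.1 - p.2), ← mul_pow]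
  gcongr
  exact hG.dist_le_mul p.1 p.2

lemma abs_taylor_remainder_le {G : ℝ → ℝ} (hG : Differentiable ℝ G) {K : ℝ≥0}
    (hG' : LipschitzWith K (deriv G)) (u v : ℝ) :
    |G v - G u - deriv G u * (v - u)| ≤ K * (u - v) ^ 2 := by
  have h_deriv (x : ℝ) :
      HasDerivAt (fun x ↦ G x - deriv G u * x) (deriv G x - deriv G u) x := by
    simpa only [mul_one] using! (hG x).hasDerivAt.sub ((hasDerivAt_id x).const_mul (deriv G u))
  have h_bound (x : ℝ) (hx : x ∈ Set.uIcc u v) : ‖deriv G x - deriv G u‖ ≤ K * |v - u| :=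
    (hG'.dist_le_mul x u).trans <| by
      gcongr
      exact Set.abs_sub_left_of_mem_uIcc hx
  have h_mvt := (convex_uIcc u v).norm_image_sub_le_of_norm_hasDerivWithin_le
    (fun x _ ↦ (h_deriv x).hasDerivWithinAt) h_bound Set.left_mem_uIcc Set.right_mem_uIcc
  calc |G v - G u - deriv G u * (v - u)|
      = ‖G v - deriv G u * v - (G u - deriv G u * u)‖ := by rw [Real.norm_eq_abs]; congr 1; ring
    _ ≤ K * |v - u| * ‖v - u‖ := h_mvt
    _ = K * (u - v) ^ 2 := by rw [Real.norm_eq_abs, mul_assoc, ← sq, sq_abs]; ring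

/-- The increment `G v - G u`, corrected by the linear Taylor term when `|v - u| < a`. The cutoff
keeps the correction, whose principal value vanishes by oddness, inside the unit interval. -/
def cutoffTaylorRemainder (a : ℝ) (G : ℝ → ℝ) (u v : ℝ) : ℝ :=
  G v - G u - if |v - u| < a then deriv G u * (v - u) else 0

lemma abs_cutoffTaylorRemainder_le {a : ℝ} (ha : 0 < a) {G : ℝ → ℝ} (hG_diff : Differentiable ℝ G)
    {L K : ℝ≥0} (hG : LipschitzWith L G) (hG' : LipschitzWith K (deriv G)) (u v : ℝ) :
    |cutoffTaylorRemainder a G u v| ≤ (K + L / a) * (u - v) ^ 2 := by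
  rw [cutoffTaylorRemainder, add_mul]
  split_ifs with h
  · exact (abs_taylor_remainder_le hG_diff hG' u v).trans (le_add_of_nonneg_right (by positivity))
  · calc |G v - G u - 0| ≤ L * |v - u| := by
          simpa only [sub_zero, Real.dist_eq] using hG.dist_le_mul v u
      _ ≤ L / a * |v - u| * |v - u| := by
          rw [div_mul_eq_mul_div]
          gcongr
          rw [le_div_iff₀ ha]
          gcongr
          exact not_lt.mp h
      _ = L / a * (u - v) ^ 2 := by rw [mul_assoc, ← sq, sq_abs]; ring
      _ ≤ K * (u - v) ^ 2 + L / a * (u - v) ^ 2 := le_add_of_nonneg_left (by positivity)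

lemma measurable_cutoffTaylorRemainder (a : ℝ) {G : ℝ → ℝ} (hG : Measurable G) :
    Measurable fun p : ℝ × ℝ ↦ cutoffTaylorRemainder a G p.1 p.2 := by
  have h_linear : Measurable fun p : ℝ × ℝ ↦ deriv G p.1 * (p.2 - p.1) :=
    ((measurable_deriv G).comp measurable_fst).mul (by fun_prop)
  refine Measurable.sub (by fun_prop) (Measurable.ite ?_ h_linear measurable_const)
  exact measurableSet_lt (by fun_prop) measurable_const

lemma integral_eq_zero_of_odd_about {E : Type*} [NormedAddCommGroup E] [NormedSpace ℝ E]
    {f : ℝ → E} (c : ℝ) (hf : ∀ x, f (2 * c - x) = -f x) : ∫ x, f x = 0 := by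
  have h_reflect := integral_sub_left_eq_self f volume (2 * c)
  simp only [hf, integral_neg] at h_reflect
  have h_double : (2 : ℝ) • ∫ x, f x = 0 := by
    rw [two_smul, ← eq_neg_iff_add_eq_zero, h_reflect]
  exact (smul_eq_zero.mp h_double).resolve_left two_ne_zero

lemma integrableOn_mul_abs_rpow_of_le {α : Type*} [MeasurableSpace α] {μ : Measure α}
    {f t : α → ℝ} (hf : Integrable f μ) (ht : Measurable t) {ε r : ℝ} (hε : 0 < ε) (hr : r ≤ 0) :
    IntegrableOn (fun x ↦ f x * |t x| ^ r) {x | ε ≤ |t x|} μ := by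
  refine hf.integrableOn.mul_bdd (c := ε ^ r) (ht.abs.pow_const r).aestronglyMeasurable ?_
  filter_upwards [ae_restrict_mem (measurableSet_le measurable_const ht.abs)] with x hx
  rw [Real.norm_eq_abs, abs_of_nonneg (by positivity)]
  exact Real.rpow_le_rpow_of_nonpos hε hx hr

lemma setIntegral_cutoff_linear_mul_eq_zero {a u : ℝ} (ha : Metric.closedBall u a ⊆ Set.Icc 0 1)
    (ε b r : ℝ) :
    ∫ v in {v | ε ≤ |u - v|}, (if |v - u| < a then b * (v - u) else 0) * |u - v| ^ r
      ∂unitMeasure = 0 := by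
  rw [← integral_indicator (measurableSet_le measurable_const (by fun_prop)),
    setIntegral_eq_integral_of_forall_compl_eq_zero]
  · refine integral_eq_zero_of_odd_about u fun v ↦ ?_
    simp only [Set.indicator, Set.mem_ofPred_eq, show u - (2 * u - v) = v - u by ring,
      show 2 * u - v - u = u - v by ring, abs_sub_comm u v]
    split_ifs <;> ring
  · intro v hv
    have h_far : ¬|v - u| < a := fun h ↦ hv (ha (Metric.mem_closedBall.mpr h.le))
    simp only [Set.indicator, h_far, if_false, zero_mul, ite_self]

lemma setIntegral_cutoffTaylorRemainder_mul {G : ℝ → ℝ} (hG : Continuous G) {a u : ℝ}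
    (ha : deriv G u ≠ 0 → Metric.closedBall u a ⊆ Set.Icc 0 1) {ε r : ℝ} (hε : 0 < ε)
    (hr : r ≤ 0) :
    ∫ v in {v | ε ≤ |u - v|}, cutoffTaylorRemainder a G u v * |u - v| ^ r ∂unitMeasure =
      ∫ v in {v | ε ≤ |u - v|}, (G v - G u) * |u - v| ^ r ∂unitMeasure := by
  by_cases hGu : deriv G u = 0
  · simp only [cutoffTaylorRemainder, hGu, zero_mul, ite_self, sub_zero]
  have h_increment : Integrable (fun v ↦ G v - G u) unitMeasure :=
    (hG.sub continuous_const).integrableOn_Icc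
  have h_linear : Integrable (fun v ↦ if |v - u| < a then deriv G u * (v - u) else 0)
      unitMeasure := by
    have h_cont : Continuous fun v ↦ deriv G u * (v - u) := by fun_prop
    exact Integrable.indicator (s := {v | |v - u| < a}) h_cont.integrableOn_Icc
      (measurableSet_lt (by fun_prop) measurable_const)
  have h_t : Measurable fun v ↦ u - v := by fun_prop
  simp only [cutoffTaylorRemainder, sub_mul _ (ite _ _ _)]
  rw [integral_sub (integrableOn_mul_abs_rpow_of_le h_increment h_t hε hr)
    (integrableOn_mul_abs_rpow_of_le h_linear h_t hε hr),
    setIntegral_cutoff_linear_mul_eq_zero (ha hGu), sub_zero]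

/-! ### Integration by parts -/

lemma HasFracLapAt.fracLap_eq {γ u L : ℝ} {F : ℝ → ℝ} (h : HasFracLapAt γ F u L) :
    fracLap γ F u = L := by
  have h_exists : ∃ L, HasFracLapAt γ F u L := ⟨L, h⟩
  rw [fracLap, dif_pos h_exists]
  exact tendsto_nhds_unique h_exists.choose_spec h

lemma integrable_cutoffTaylorRemainder_mul {s : ℝ} (hs : -3 < s) {a C u : ℝ} {G : ℝ → ℝ}
    (hG : Measurable G) (hC : 0 ≤ C)
    (h_le : ∀ v, |cutoffTaylorRemainder a G u v| ≤ C * (u - v) ^ 2) (hu : u ∈ Set.Icc (0 : ℝ) 1) :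
    Integrable (fun v ↦ cutoffTaylorRemainder a G u v * |u - v| ^ s) unitMeasure := by
  have h_meas := (measurable_cutoffTaylorRemainder a hG).comp (measurable_prodMk_left (x := u))
  refine ((integrable_abs_sub_rpow (s := 2 + s) (by linarith) hu).const_mul C).mono'
    (h_meas.mul (by fun_prop)).aestronglyMeasurable
    (ae_of_all _ fun v ↦ abs_mul_abs_rpow_le hC (h_le v) s)

lemma integrable_mul_cutoffTaylorRemainder_mul {s : ℝ} (hs : -3 < s) {a C : ℝ} {Φ G : ℝ → ℝ}
    (hΦ : Integrable Φ unitMeasure) (hG : Measurable G) (hC : 0 ≤ C)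
    (h_le : ∀ u v, |cutoffTaylorRemainder a G u v| ≤ C * (u - v) ^ 2) :
    Integrable (fun p : ℝ × ℝ ↦ Φ p.1 * (cutoffTaylorRemainder a G p.1 p.2 * |p.1 - p.2| ^ s))
      squareMeasure := by
  have h_meas := (measurable_cutoffTaylorRemainder a hG).mul
    (g := fun p : ℝ × ℝ ↦ |p.1 - p.2| ^ s) (by fun_prop)
  refine ((integrable_mul_abs_sub_rpow (s := 2 + s) (by linarith) hΦ).norm.const_mul C).mono'
    (hΦ.aestronglyMeasurable.comp_fst.mul h_meas.aestronglyMeasurable) (ae_of_all _ fun p ↦ ?_)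
  calc ‖Φ p.1 * (cutoffTaylorRemainder a G p.1 p.2 * |p.1 - p.2| ^ s)‖
      ≤ ‖Φ p.1‖ * (C * |p.1 - p.2| ^ (2 + s)) := by
        rw [norm_mul]
        gcongr
        exact abs_mul_abs_rpow_le hC (h_le p.1 p.2) s
    _ = C * ‖Φ p.1 * |p.1 - p.2| ^ (2 + s)‖ := by
        rw [norm_mul, Real.norm_of_nonneg (r := |p.1 - p.2| ^ (2 + s)) (by positivity)]
        ring

lemma hasFracLapAt_integral_cutoffTaylorRemainder {γ : ℝ} (hγ : γ ∈ Set.Ico (-1) 2) {G : ℝ → ℝ}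
    (hG : Continuous G) {a C u : ℝ} (hC : 0 ≤ C)
    (h_le : ∀ v, |cutoffTaylorRemainder a G u v| ≤ C * (u - v) ^ 2) (hu : u ∈ Set.Icc (0 : ℝ) 1)
    (ha : deriv G u ≠ 0 → Metric.closedBall u a ⊆ Set.Icc 0 1) :
    HasFracLapAt γ G u
      (cGamma γ * ∫ v, cutoffTaylorRemainder a G u v * |u - v| ^ (-(1 + γ)) ∂unitMeasure) := by
  have h_ne : ∀ᵐ v ∂unitMeasure, u - v ≠ 0 := by
    filter_upwards [measure_eq_zero_iff_ae_notMem.mp (measure_singleton (μ := unitMeasure) u)]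
      with v hv
    exact sub_ne_zero.mpr (Ne.symm hv)
  have h_lim := (aecover_setOf_le_abs (by fun_prop) h_ne).integral_tendsto_of_countably_generated
    (integrable_cutoffTaylorRemainder_mul (s := -(1 + γ)) (by linarith [hγ.2]) hG.measurable hC
      h_le hu)
  refine (h_lim.const_mul (cGamma γ)).congr' ?_
  filter_upwards [self_mem_nhdsWithin] with ε hε
  rw [setIntegral_cutoffTaylorRemainder_mul hG ha hε (by linarith [hγ.1]),
    Measure.restrict_restrict (measurableSet_le measurable_const (by fun_prop)), Set.inter_comm]
  simp only [abs_sub_comm u]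
  rfl

lemma IsSpatialTest.hasCompactSupport {G : ℝ → ℝ} (hG : IsSpatialTest G) : HasCompactSupport G :=
  let ⟨_, _, hK, _, hGK⟩ := hG
  HasCompactSupport.of_support_subset_isCompact hK hGK

lemma IsSpatialTest.exists_lipschitzWith {G : ℝ → ℝ} (hG : IsSpatialTest G) :
    ∃ L, LipschitzWith L G :=
  hG.1.lipschitzWith_of_hasCompactSupport hG.hasCompactSupport (by simp)

lemma IsSpatialTest.exists_lipschitzWith_deriv {G : ℝ → ℝ} (hG : IsSpatialTest G) :
    ∃ K, LipschitzWith K (deriv G) :=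
  (contDiff_infty_iff_deriv.mp hG.1).2.lipschitzWith_of_hasCompactSupport
    hG.hasCompactSupport.deriv (by simp)

lemma IsSpatialTest.exists_closedBall_subset {G : ℝ → ℝ} (hG : IsSpatialTest G) :
    ∃ a > 0, ∀ u, deriv G u ≠ 0 → Metric.closedBall u a ⊆ Set.Icc 0 1 := by
  obtain ⟨K, hK, hK_Ioo, hGK⟩ := hG.2
  obtain ⟨a, ha, haK⟩ := hK.exists_cthickening_subset_open isOpen_Ioo hK_Ioo
  refine ⟨a, ha, fun u hu v hv ↦ Set.Ioo_subset_Icc_self (haK ?_)⟩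
  have hu_mem : u ∈ K := closure_minimal hGK hK.isClosed (support_deriv_subset hu)
  exact Metric.mem_cthickening_of_dist_le v u a K hu_mem hv

lemma IsSpatialTest.exists_cutoffTaylorRemainder_le {G : ℝ → ℝ} (hG : IsSpatialTest G) {a : ℝ}
    (ha : 0 < a) : ∃ C ≥ 0, ∀ u v, |cutoffTaylorRemainder a G u v| ≤ C * (u - v) ^ 2 := by
  obtain ⟨L, hL⟩ := hG.exists_lipschitzWith
  obtain ⟨K, hK⟩ := hG.exists_lipschitzWith_deriv
  exact ⟨K + L / a, by positivity,
    abs_cutoffTaylorRemainder_le ha (hG.1.differentiable (by simp)) hL hK⟩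

lemma setIntegral_fracDiff_mul_fracDiff {γ : ℝ} (hγ : γ ∈ Set.Ico (-1) 2) {Φ G : ℝ → ℝ}
    (hΦ : Integrable Φ unitMeasure) (hG : Continuous G) {a C : ℝ} (hC : 0 ≤ C)
    (h_le : ∀ u v, |cutoffTaylorRemainder a G u v| ≤ C * (u - v) ^ 2)
    (ha : ∀ u, deriv G u ≠ 0 → Metric.closedBall u a ⊆ Set.Icc 0 1) {ε : ℝ} (hε : 0 < ε) :
    ∫ p in awayFromDiagonal ε, fracDiff γ Φ p * fracDiff γ G p ∂squareMeasure =
      -2 * ∫ p in awayFromDiagonal ε,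
        Φ p.1 * (cutoffTaylorRemainder a G p.1 p.2 * |p.1 - p.2| ^ (-(1 + γ))) ∂squareMeasure := by
  have h_increment : Integrable (fun p : ℝ × ℝ ↦ Φ p.1 * (G p.2 - G p.1)) squareMeasure := by
    have hΦG : Integrable (fun u ↦ Φ u * G u) unitMeasure :=
      IntegrableOn.mul_continuousOn hΦ hG.continuousOn isCompact_Icc
    simpa only [mul_sub] using! (hΦ.mul_prod hG.integrableOn_Icc).sub (hΦG.comp_fst unitMeasure)
  have h_truncated : IntegrableOn
      (fun p : ℝ × ℝ ↦ Φ p.1 * ((G p.2 - G p.1) * |p.1 - p.2| ^ (-(1 + γ))))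
      (awayFromDiagonal ε) squareMeasure := by
    simpa only [mul_assoc] using!
      integrableOn_mul_abs_rpow_of_le h_increment (by fun_prop) hε (by linarith [hγ.1])
  have h_remainder := integrable_mul_cutoffTaylorRemainder_mul (s := -(1 + γ))
    (by linarith [hγ.2]) hΦ hG.measurable hC h_le
  simp only [fracDiff_mul_fracDiff]
  rw [integral_sub_mul_sub_mul_of_swap (measurePreserving_swap_restrict_awayFromDiagonal ε)
      (fun p ↦ by rw [Prod.fst_swap, Prod.snd_swap, abs_sub_comm]) h_truncated,
    setIntegral_prod_eq_integral_section (measurableSet_awayFromDiagonal ε) h_truncated,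
    setIntegral_prod_eq_integral_section (measurableSet_awayFromDiagonal ε)
      h_remainder.integrableOn]
  simp only [integral_const_mul]
  congr! 4 with u
  exact (setIntegral_cutoffTaylorRemainder_mul hG (ha u) hε (by linarith [hγ.1])).symm

lemma fracInner_eq_neg_integral_mul_fracLap {γ : ℝ} (hγ : γ ∈ Set.Ico (-1) 2) {Φ G : ℝ → ℝ}
    (hΦ : Integrable Φ unitMeasure) (hΦ_diff : MemLp (fracDiff γ Φ) 2 squareMeasure)
    (hG : IsSpatialTest G) : fracInner γ Φ G = -∫ u, Φ u * fracLap γ G u ∂unitMeasure := by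
  obtain ⟨a, ha, ha_ball⟩ := hG.exists_closedBall_subset
  obtain ⟨C, hC, h_le⟩ := hG.exists_cutoffTaylorRemainder_le ha
  obtain ⟨L, hL⟩ := hG.exists_lipschitzWith
  set R := cutoffTaylorRemainder a G
  have h_cover : AECover squareMeasure (𝓝[>] 0) awayFromDiagonal := by
    refine aecover_setOf_le_abs (t := fun p : ℝ × ℝ ↦ p.1 - p.2) (by fun_prop) ?_
    simpa only [sub_ne_zero] using ae_fst_ne_snd unitMeasure unitMeasure
  have hG_diff := memLp_fracDiff_of_lipschitzWith hγ.2 hL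
  have h_remainder := integrable_mul_cutoffTaylorRemainder_mul (s := -(1 + γ))
    (by linarith [hγ.2]) hΦ hL.continuous.measurable hC h_le
  have h_untruncated : ∫ p, fracDiff γ Φ p * fracDiff γ G p ∂squareMeasure =
      -2 * ∫ p, Φ p.1 * (R p.1 p.2 * |p.1 - p.2| ^ (-(1 + γ))) ∂squareMeasure := by
    refine tendsto_nhds_unique_of_eventuallyEq
      (h_cover.integral_tendsto_of_countably_generated (hΦ_diff.integrable_mul hG_diff))
      ((h_cover.integral_tendsto_of_countably_generated h_remainder).const_mul (-2)) ?_
    filter_upwards [self_mem_nhdsWithin] with ε hε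
    exact setIntegral_fracDiff_mul_fracDiff hγ hΦ hL.continuous hC h_le ha_ball hε
  have h_lap : ∀ u ∈ Set.Icc (0 : ℝ) 1,
      fracLap γ G u = cGamma γ * ∫ v, R u v * |u - v| ^ (-(1 + γ)) ∂unitMeasure := fun u hu ↦
    (hasFracLapAt_integral_cutoffTaylorRemainder hγ hL.continuous hC (h_le u) hu
      (ha_ball u)).fracLap_eq
  calc fracInner γ Φ G
      = -(cGamma γ * ∫ u, Φ u * ∫ v, R u v * |u - v| ^ (-(1 + γ)) ∂unitMeasure ∂unitMeasure) := by
        rw [fracInner_eq_integral hΦ_diff hG_diff, h_untruncated, integral_prod _ h_remainder]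
        simp only [integral_const_mul]
        ring
    _ = -∫ u, Φ u * fracLap γ G u ∂unitMeasure := by
        rw [← integral_const_mul, setIntegral_congr_fun measurableSet_Icc fun u hu ↦ ?_]
        simp only [h_lap u hu]
        ring

/-! ### Mollification -/

section Mollification

variable {G α : Type*} [NormedAddCommGroup G] [MeasurableSpace G] [BorelSpace G]
  [TopologicalSpace α] [R1Space α] [MeasurableSpace α] [BorelSpace α]
  [AddAction G α] [ContinuousVAdd G α] {μ : Measure α} [IsLocallyFiniteMeasure μ]
  [μ.InnerRegularCompactLTTop] [VAddInvariantMeasure G α μ] {f g : α → ℝ}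

lemma continuous_integral_mul_vadd (hf : MemLp f 2 μ) (hg : MemLp g 2 μ) :
    Continuous fun c : G ↦ ∫ x, f x * g (c +ᵥ x) ∂μ := by
  have : Fact ((2 : ℝ≥0∞) ≠ ⊤) := ⟨ENNReal.ofNat_ne_top⟩
  have h_orbit : Continuous fun c : G ↦ DomAddAct.mk c +ᵥ hg.toLp g :=
    DomAddAct.continuous_mk.vadd continuous_const
  refine ((continuous_const (y := hf.toLp f)).inner (𝕜 := ℝ) h_orbit).congr fun c ↦ ?_
  rw [L2.inner_def]
  refine integral_congr_ae ?_
  rw [DomAddAct.mk_vadd_toLp]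
  filter_upwards [hf.coeFn_toLp,
    (hg.comp_measurePreserving (measurePreserving_vadd c μ)).coeFn_toLp] with x hfx hgx
  rw [hfx, RCLike.inner_apply', conj_trivial]
  exact congrArg (f x * ·) hgx

lemma integrable_mul_mul_vadd [SecondCountableTopology G] [SecondCountableTopology α]
    [SFinite μ] {ν : Measure G} [IsFiniteMeasureOnCompacts ν] [SFinite ν] {η : G → ℝ}
    (hη : Continuous η) (hη_supp : HasCompactSupport η) (hf : MemLp f 2 μ) (hg : MemLp g 2 μ) :
    Integrable (fun z : G × α ↦ η z.1 * (f z.2 * g (-z.1 +ᵥ z.2))) (ν.prod μ) := by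
  have h_shift : Measure.QuasiMeasurePreserving (fun z : G × α ↦ -z.1 +ᵥ z.2) (ν.prod μ) μ :=
    Measure.quasiMeasurePreserving_snd.comp
      ((MeasurePreserving.id ν).skew_product (g := fun c x ↦ -c +ᵥ x) (by fun_prop)
        (ae_of_all _ fun c ↦ (measurePreserving_vadd (-c) μ).map_eq)).quasiMeasurePreserving
  have h_meas : AEStronglyMeasurable (fun z : G × α ↦ η z.1 * (f z.2 * g (-z.1 +ᵥ z.2)))
      (ν.prod μ) :=
    (hη.comp continuous_fst).aestronglyMeasurable.mul
      (hf.1.comp_snd.mul (hg.1.comp_quasiMeasurePreserving h_shift))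
  refine (integrable_prod_iff h_meas).mpr ⟨ae_of_all _ fun c ↦ ?_, ?_⟩
  · exact (hf.integrable_mul
      (hg.comp_measurePreserving (measurePreserving_vadd (-c) μ))).const_mul (η c)
  · simp only [norm_mul, integral_const_mul]
    have h_cont : Continuous fun c : G ↦ ‖η c‖ * ∫ x, ‖f x‖ * ‖g (-c +ᵥ x)‖ ∂μ :=
      hη.norm.mul ((continuous_integral_mul_vadd hf.norm hg.norm).comp continuous_neg)
    exact h_cont.integrable_of_hasCompactSupport hη_supp.norm.mul_right

lemma tendsto_integral_mul_integral_normed_vadd [NormedSpace ℝ G] [FiniteDimensional ℝ G]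
    [SecondCountableTopology α] [SFinite μ] {ν : Measure G} [ν.IsAddHaarMeasure]
    {ι : Type*} {l : Filter ι} {φ : ι → ContDiffBump (0 : G)}
    (hφ : Tendsto (fun i ↦ (φ i).rOut) l (𝓝 0)) (hf : MemLp f 2 μ) (hg : MemLp g 2 μ) :
    Tendsto (fun i ↦ ∫ x, f x * ∫ c, (φ i).normed ν c * g (-c +ᵥ x) ∂ν ∂μ) l
      (𝓝 (∫ x, f x * g x ∂μ)) := by
  have h_lim := ContDiffBump.convolution_tendsto_right_of_continuous (μ := ν) hφ
    (continuous_integral_mul_vadd hf hg) 0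
  simp only [zero_vadd] at h_lim
  refine h_lim.congr fun i ↦ ?_
  have h_int := integrable_mul_mul_vadd (ν := ν) ((φ i).continuous_normed (μ := ν))
    (φ i).hasCompactSupport_normed hf hg
  calc ∫ c, (φ i).normed ν c • ∫ x, f x * g ((0 - c) +ᵥ x) ∂μ ∂ν
      = ∫ c, ∫ x, (φ i).normed ν c * (f x * g (-c +ᵥ x)) ∂μ ∂ν := by
        simp only [zero_sub, smul_eq_mul, integral_const_mul]
    _ = ∫ x, ∫ c, (φ i).normed ν c * (f x * g (-c +ᵥ x)) ∂ν ∂μ := integral_integral_swap h_int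
    _ = ∫ x, f x * ∫ c, (φ i).normed ν c * g (-c +ᵥ x) ∂ν ∂μ := by
        simp only [mul_left_comm _ (f _), integral_const_mul]

end Mollification

lemma vaddInvariantMeasure_prod {G α β : Type*} [AddGroup G] [MeasurableSpace α]
    [MeasurableSpace β] [AddAction G α] [AddAction G β] [MeasurableConstVAdd G α]
    [MeasurableConstVAdd G β] (μ : Measure α) (ν : Measure β) [SFinite μ] [SFinite ν]
    [VAddInvariantMeasure G α μ] [VAddInvariantMeasure G β ν] :
    VAddInvariantMeasure G (α × β) (μ.prod ν) where
  measure_preimage_vadd c _ hs :=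
    ((measurePreserving_vadd c μ).prod (measurePreserving_vadd c ν)).measure_preimage
      hs.nullMeasurableSet

lemma abs_fracDiff_le_of_notMem_prod {γ : ℝ} (hγ : -1 ≤ γ) {a M : ℝ} (ha : 0 < a) {s : Set ℝ}
    {W : ℝ → ℝ} (hM : ∀ u, |W u| ≤ M) (hs : ∀ u, W u ≠ 0 → Metric.closedBall u a ⊆ s) {p : ℝ × ℝ}
    (hp : p ∉ s ×ˢ s) : |fracDiff γ W p| ≤ 2 * M * a ^ (-(1 + γ) / 2) := by
  have hM_nonneg : 0 ≤ M := (abs_nonneg _).trans (hM 0)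
  by_cases h_near : |p.1 - p.2| ≤ a
  · have h_fst : W p.1 = 0 := by
      by_contra h
      exact hp ⟨hs _ h (Metric.mem_closedBall_self ha.le),
        hs _ h (by rwa [Metric.mem_closedBall', Real.dist_eq])⟩
    have h_snd : W p.2 = 0 := by
      by_contra h
      exact hp ⟨hs _ h (by rwa [Metric.mem_closedBall, Real.dist_eq]),
        hs _ h (Metric.mem_closedBall_self ha.le)⟩
    rw [fracDiff, h_fst, h_snd, sub_self, zero_mul, abs_zero]
    positivity
  · rw [fracDiff, abs_mul, abs_of_nonneg (Real.rpow_nonneg (abs_nonneg (p.1 - p.2)) _)]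
    have h_diff : |W p.1 - W p.2| ≤ 2 * M := by
      linarith [abs_sub (W p.1) (W p.2), hM p.1, hM p.2]
    exact mul_le_mul h_diff
      (Real.rpow_le_rpow_of_nonpos ha (not_le.mp h_near).le (by linarith)) (by positivity)
      (by positivity)

lemma memLp_indicator_fracDiff {γ : ℝ} (hγ : -1 ≤ γ) {a : ℝ} (ha : 0 < a) {W : ℝ → ℝ}
    (hW : Continuous W) (hW_supp : HasCompactSupport W)
    (hW_ball : ∀ u, W u ≠ 0 → Metric.closedBall u a ⊆ Set.Icc 0 1)
    (hW_diff : MemLp (fracDiff γ W) 2 squareMeasure) {s : Set (ℝ × ℝ)} (hs : MeasurableSet s)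
    (hs_finite : volume s ≠ ⊤) : MemLp (s.indicator (fracDiff γ W)) 2 volume := by
  obtain ⟨M, hM⟩ := hW_supp.exists_bound_of_continuous hW
  have h_square : MeasurableSet (Set.Icc (0 : ℝ) 1 ×ˢ Set.Icc (0 : ℝ) 1) :=
    measurableSet_Icc.prod measurableSet_Icc
  rw [squareMeasure_eq_restrict, ← memLp_indicator_iff_restrict h_square] at hW_diff
  refine (hW_diff.norm.add (memLp_indicator_const 2 hs (2 * M * a ^ (-(1 + γ) / 2))
    (Or.inr hs_finite))).mono'
    ((measurable_fracDiff γ hW.measurable).indicator hs).aestronglyMeasurable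
    (ae_of_all _ fun p ↦ ?_)
  have hM_nonneg : 0 ≤ M := (norm_nonneg _).trans (hM 0)
  by_cases hps : p ∈ s
  · by_cases hp : p ∈ Set.Icc (0 : ℝ) 1 ×ˢ Set.Icc (0 : ℝ) 1
    · simp only [Pi.add_apply, Set.indicator_of_mem hps, Set.indicator_of_mem hp]
      exact le_add_of_nonneg_right (by positivity)
    · simp only [Pi.add_apply, Set.indicator_of_mem hps, Set.indicator_of_notMem hp, norm_zero,
        zero_add]
      exact abs_fracDiff_le_of_notMem_prod hγ ha hM hW_ball hp
  · simp only [Pi.add_apply, Set.indicator_of_notMem hps, norm_zero, add_zero]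
    positivity

lemma fracDiff_vadd (γ : ℝ) (W : ℝ → ℝ) (t : ℝ) (p : ℝ × ℝ) :
    fracDiff γ W (t +ᵥ p) = fracDiff γ (fun u ↦ W (t + u)) p := by
  rw [fracDiff, fracDiff, Prod.vadd_fst, Prod.vadd_snd, vadd_eq_add, vadd_eq_add,
    add_sub_add_left_eq_sub]

open scoped Convolution in
lemma fracDiff_convolution (γ : ℝ) {η W : ℝ → ℝ} (hη : Continuous η) (hη_supp : HasCompactSupport η)
    (hW : Continuous W) (p : ℝ × ℝ) :
    fracDiff γ (η ⋆[ContinuousLinearMap.lsmul ℝ ℝ] W) p = ∫ t, η t * fracDiff γ W (-t +ᵥ p) := by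
  have h_int (u : ℝ) : Integrable fun t ↦ η t * W (u - t) :=
    Continuous.integrable_of_hasCompactSupport (by fun_prop) hη_supp.mul_right
  simp only [fracDiff_vadd]
  simp only [fracDiff, convolution_lsmul, smul_eq_mul, neg_add_eq_sub, ← mul_assoc, mul_sub,
    integral_mul_const, integral_sub (h_int p.1) (h_int p.2)]

open scoped Convolution in
lemma isSpatialTest_convolution {η W : ℝ → ℝ} {δ : ℝ} {K : Set ℝ} (hη : ContDiff ℝ (⊤ : ℕ∞) η)
    (hη_supp : Function.support η ⊆ Metric.closedBall 0 δ) (hW : Continuous W) (hK : IsCompact K)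
    (hWK : Function.support W ⊆ K) (hδ : Metric.cthickening δ K ⊆ Set.Ioo 0 1) :
    IsSpatialTest (η ⋆[ContinuousLinearMap.lsmul ℝ ℝ] W) := by
  have hη_compact : HasCompactSupport η :=
    HasCompactSupport.of_support_subset_isCompact (isCompact_closedBall 0 δ) hη_supp
  refine ⟨hη_compact.contDiff_convolution_left _ hη hW.locallyIntegrable, _, hK.cthickening, hδ, ?_⟩
  refine (support_convolution_subset_swap _).trans ?_
  rintro _ ⟨w, hw, t, ht, rfl⟩
  refine Metric.mem_cthickening_of_dist_le _ w δ K (hWK hw) ?_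
  simpa using hη_supp ht

lemma norm_vadd_prod_le (t : ℝ) (p : ℝ × ℝ) : ‖t +ᵥ p‖ ≤ ‖t‖ + ‖p‖ := by
  rw [Prod.norm_def, Prod.vadd_fst, Prod.vadd_snd, vadd_eq_add, vadd_eq_add]
  exact max_le ((norm_add_le _ _).trans (by gcongr; exact norm_fst_le p))
    ((norm_add_le _ _).trans (by gcongr; exact norm_snd_le p))

open scoped Convolution in
lemma integral_mul_indicator_fracDiff_vadd {γ : ℝ} {η W : ℝ → ℝ} (hη : Continuous η)
    (hη_supp : HasCompactSupport η) (hW : Continuous W) {δ r : ℝ}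
    (hη_ball : Function.support η ⊆ Metric.closedBall 0 δ) {p : ℝ × ℝ} (hp : ‖p‖ ≤ r) :
    ∫ t, η t * (Metric.closedBall 0 (δ + r)).indicator (fracDiff γ W) (-t +ᵥ p) =
      fracDiff γ (η ⋆[ContinuousLinearMap.lsmul ℝ ℝ] W) p := by
  rw [fracDiff_convolution γ hη hη_supp hW]
  refine integral_congr_ae (ae_of_all _ fun t ↦ ?_)
  by_cases ht : η t = 0
  · simp only [ht, zero_mul]
  · refine congrArg (η t * ·) (Set.indicator_of_mem ?_ _)
    rw [mem_closedBall_zero_iff]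
    refine (norm_vadd_prod_le _ _).trans (add_le_add ?_ hp)
    simpa using hη_ball ht

open scoped Convolution in
lemma tendsto_integral_mul_fracDiff_normed_convolution {γ : ℝ} (hγ : -1 ≤ γ) {A : ℝ × ℝ → ℝ}
    (hA : MemLp A 2 squareMeasure) {W : ℝ → ℝ} (hW : Continuous W) (hW_supp : HasCompactSupport W)
    {a : ℝ} (ha : 0 < a) (hW_ball : ∀ u, W u ≠ 0 → Metric.closedBall u a ⊆ Set.Icc 0 1)
    (hW_diff : MemLp (fracDiff γ W) 2 squareMeasure) {ι : Type*} {l : Filter ι}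
    {φ : ι → ContDiffBump (0 : ℝ)} (hφ : Tendsto (fun i ↦ (φ i).rOut) l (𝓝 0)) :
    Tendsto (fun i ↦ ∫ p, A p *
        fracDiff γ ((φ i).normed volume ⋆[ContinuousLinearMap.lsmul ℝ ℝ] W) p ∂squareMeasure) l
      (𝓝 (∫ p, A p * fracDiff γ W p ∂squareMeasure)) := by
  rw [squareMeasure_eq_restrict] at hA ⊢
  set square : Set (ℝ × ℝ) := Set.Icc 0 1 ×ˢ Set.Icc 0 1
  have h_square : MeasurableSet square := measurableSet_Icc.prod measurableSet_Icc
  have h_square_norm {p : ℝ × ℝ} (hp : p ∈ square) : ‖p‖ ≤ 1 :=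
    max_le ((Real.norm_of_nonneg hp.1.1).trans_le hp.1.2)
      ((Real.norm_of_nonneg hp.2.1).trans_le hp.2.2)
  -- The cutoff makes `fracDiff γ W` globally `L²` and is not seen by shifts of the square by `1`.
  set cutoff := (Metric.closedBall (0 : ℝ × ℝ) (1 + 1)).indicator (fracDiff γ W)
  have h_cutoff : MemLp cutoff 2 volume :=
    memLp_indicator_fracDiff hγ ha hW hW_supp hW_ball hW_diff
      Metric.isClosed_closedBall.measurableSet measure_closedBall_lt_top.ne
  have h_restrict (g : ℝ × ℝ → ℝ) :
      ∫ p, square.indicator A p * g p = ∫ p in square, A p * g p := by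
    simp only [← integral_indicator h_square, Set.indicator_mul_left]
  have : VAddInvariantMeasure ℝ (ℝ × ℝ) volume := vaddInvariantMeasure_prod volume volume
  have h_lim := tendsto_integral_mul_integral_normed_vadd (ν := volume) hφ
    ((memLp_indicator_iff_restrict h_square).mpr hA) h_cutoff
  simp only [h_restrict] at h_lim
  have h_limit : ∫ p in square, A p * cutoff p = ∫ p in square, A p * fracDiff γ W p :=
    setIntegral_congr_fun h_square fun p hp ↦ congrArg (A p * ·) (Set.indicator_of_mem
      (mem_closedBall_zero_iff.mpr ((h_square_norm hp).trans (by norm_num))) _)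
  refine (h_limit ▸ h_lim).congr' ?_
  filter_upwards [hφ.eventually_le_const one_pos] with i hi
  have hi_ball : Function.support ((φ i).normed volume) ⊆ Metric.closedBall 0 1 :=
    (φ i).support_normed_eq.trans_subset
      (Metric.ball_subset_closedBall.trans (Metric.closedBall_subset_closedBall hi))
  exact setIntegral_congr_fun h_square fun p hp ↦ congrArg (A p * ·)
    (integral_mul_indicator_fracDiff_vadd (φ i).continuous_normed (φ i).hasCompactSupport_normed hW
      hi_ball (h_square_norm hp))

lemma integral_mul_fracDiff_eq_zero_of_support_subset_isCompact {γ : ℝ} (hγ : -1 ≤ γ)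
    {A : ℝ × ℝ → ℝ} (hA : MemLp A 2 squareMeasure)
    (hA_test : ∀ G, IsSpatialTest G → ∫ p, A p * fracDiff γ G p ∂squareMeasure = 0)
    {W : ℝ → ℝ} (hW : Continuous W) (hW_diff : MemLp (fracDiff γ W) 2 squareMeasure)
    {K : Set ℝ} (hK : IsCompact K) (hK_Ioo : K ⊆ Set.Ioo 0 1) (hWK : Function.support W ⊆ K) :
    ∫ p, A p * fracDiff γ W p ∂squareMeasure = 0 := by
  obtain ⟨a, ha, ha_Ioo⟩ := hK.exists_cthickening_subset_open isOpen_Ioo hK_Ioo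
  have h_ball (u : ℝ) (hu : W u ≠ 0) : Metric.closedBall u a ⊆ Set.Icc 0 1 :=
    (Metric.closedBall_subset_cthickening (hWK hu) a).trans (ha_Ioo.trans Set.Ioo_subset_Icc_self)
  let φ (n : ℕ) : ContDiffBump (0 : ℝ) :=
    ⟨1 / (n + 1) / 2, 1 / (n + 1), by positivity, half_lt_self (by positivity)⟩
  have hφ : Tendsto (fun n ↦ (φ n).rOut) atTop (𝓝 0) := tendsto_one_div_add_atTop_nhds_zero_nat
  refine tendsto_nhds_unique (tendsto_integral_mul_fracDiff_normed_convolution hγ hA hW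
    (HasCompactSupport.of_support_subset_isCompact hK hWK) ha h_ball hW_diff hφ)
    (tendsto_const_nhds.congr' ?_)
  filter_upwards [hφ.eventually_le_const ha] with n hn
  refine (hA_test _ (isSpatialTest_convolution (φ n).contDiff_normed ?_ hW hK hWK ha_Ioo)).symm
  rw [(φ n).support_normed_eq]
  exact Metric.ball_subset_closedBall.trans (Metric.closedBall_subset_closedBall hn)

/-! ### Vanishing at the endpoints -/

/-- Soft thresholding: the values in `[-δ, δ]` are sent to `0` and the others are moved by `δ`
towards `0`. It turns continuity and vanishing at the endpoints into compact support. -/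
def softThreshold (δ x : ℝ) : ℝ := x - max (-δ) (min x δ)

lemma softThreshold_eq_zero {δ x : ℝ} (h : |x| ≤ δ) : softThreshold δ x = 0 := by
  rw [softThreshold, min_eq_left (abs_le.mp h).2, max_eq_right (abs_le.mp h).1, sub_self]

lemma continuous_softThreshold (δ : ℝ) : Continuous (softThreshold δ) := by
  unfold softThreshold
  fun_prop

lemma abs_softThreshold_sub_softThreshold_le (δ x y : ℝ) :
    |softThreshold δ x - softThreshold δ y| ≤ |x - y| := by
  unfold softThreshold
  grind

lemma tendsto_softThreshold (x : ℝ) : Tendsto (softThreshold · x) (𝓝 0) (𝓝 x) := by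
  have h_cont : Continuous (softThreshold · x) := by
    unfold softThreshold
    fun_prop
  have h_zero : softThreshold 0 x = x := by
    rw [softThreshold, neg_zero, max_eq_left (min_le_right x 0), sub_zero]
  simpa only [h_zero] using h_cont.tendsto 0

lemma abs_fracDiff_softThreshold_comp_le (γ δ : ℝ) (W : ℝ → ℝ) (p : ℝ × ℝ) :
    |fracDiff γ (softThreshold δ ∘ W) p| ≤ |fracDiff γ W p| := by
  rw [fracDiff, fracDiff, abs_mul, abs_mul]
  exact mul_le_mul_of_nonneg_right (abs_softThreshold_sub_softThreshold_le δ _ _) (abs_nonneg _)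

lemma exists_isCompact_support_softThreshold_comp_subset {δ : ℝ} (hδ : 0 < δ) {W : ℝ → ℝ}
    {s : Set ℝ} (hW : Continuous W) (hs : Bornology.IsBounded s) (hW_zero : ∀ u ∉ s, W u = 0) :
    ∃ K, IsCompact K ∧ K ⊆ s ∧ Function.support (softThreshold δ ∘ W) ⊆ K := by
  have h_subset : {u | δ ≤ |W u|} ⊆ s := by
    intro u hu
    by_contra hus
    have hδ_nonpos : δ ≤ 0 := by simpa [hW_zero u hus] using! hu
    exact hδ.not_ge hδ_nonpos
  refine ⟨{u | δ ≤ |W u|}, ?_, h_subset, fun u hu ↦ ?_⟩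
  · exact Metric.isCompact_of_isClosed_isBounded (isClosed_le continuous_const hW.abs)
      (hs.subset h_subset)
  · by_contra h
    exact hu (softThreshold_eq_zero (not_le.mp h).le)

lemma integral_mul_fracDiff_eq_zero_of_notMem_Ioo {γ : ℝ} (hγ : -1 ≤ γ)
    {A : ℝ × ℝ → ℝ} (hA : MemLp A 2 squareMeasure)
    (hA_test : ∀ G, IsSpatialTest G → ∫ p, A p * fracDiff γ G p ∂squareMeasure = 0)
    {W : ℝ → ℝ} (hW : Continuous W) (hW_diff : MemLp (fracDiff γ W) 2 squareMeasure)
    (hW_zero : ∀ u ∉ Set.Ioo 0 1, W u = 0) :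
    ∫ p, A p * fracDiff γ W p ∂squareMeasure = 0 := by
  have hW_cont (δ : ℝ) : Continuous (softThreshold δ ∘ W) := (continuous_softThreshold δ).comp hW
  have h_meas (δ : ℝ) : AEStronglyMeasurable (fracDiff γ (softThreshold δ ∘ W)) squareMeasure :=
    (measurable_fracDiff γ (hW_cont δ).measurable).aestronglyMeasurable
  have h_lim : Tendsto (fun δ ↦ ∫ p, A p * fracDiff γ (softThreshold δ ∘ W) p ∂squareMeasure)
      (𝓝[>] 0) (𝓝 (∫ p, A p * fracDiff γ W p ∂squareMeasure)) := by
    refine tendsto_integral_filter_of_dominated_convergence (fun p ↦ ‖A p * fracDiff γ W p‖)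
      (Eventually.of_forall fun δ ↦ hA.1.mul (h_meas δ)) (Eventually.of_forall fun δ ↦ ?_)
      (hA.integrable_mul hW_diff).norm (ae_of_all _ fun p ↦ ?_)
    · refine ae_of_all _ fun p ↦ ?_
      rw [norm_mul, norm_mul]
      gcongr
      exact abs_fracDiff_softThreshold_comp_le γ δ W p
    · exact ((((tendsto_softThreshold _).sub (tendsto_softThreshold _)).mul_const _).const_mul
        _).mono_left nhdsWithin_le_nhds
  refine tendsto_nhds_unique h_lim (tendsto_const_nhds.congr' ?_)
  filter_upwards [self_mem_nhdsWithin] with δ hδ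
  obtain ⟨K, hK, hK_Ioo, h_supp⟩ := exists_isCompact_support_softThreshold_comp_subset hδ hW
    (Metric.isBounded_Ioo 0 1) hW_zero
  exact (integral_mul_fracDiff_eq_zero_of_support_subset_isCompact hγ hA hA_test (hW_cont δ)
    (hW_diff.mono (h_meas δ) (ae_of_all _ (abs_fracDiff_softThreshold_comp_le γ δ W))) hK hK_Ioo
    h_supp).symm

lemma HasBoundaryValues.exists_continuous {F : ℝ → ℝ} (hF : HasBoundaryValues F 0 0) :
    ∃ W, Continuous W ∧ F =ᵐ[unitMeasure] W ∧ ∀ u ∉ Set.Ioo 0 1, W u = 0 := by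
  obtain ⟨F', hF'_cont, hF'_ae, h_zero, h_one⟩ := hF
  refine ⟨Set.IccExtend zero_le_one ((Set.Icc 0 1).domRestrict F'),
    hF'_cont.domRestrict.Icc_extend', ?_, fun u hu ↦ ?_⟩
  · filter_upwards [hF'_ae, ae_restrict_mem measurableSet_Icc] with u hFu hu
    rw [hFu, Set.IccExtend_of_mem _ _ hu, Set.domRestrict_apply]
  · rcases not_and_or.mp hu with hu | hu
    · rw [Set.IccExtend_of_le_left _ _ (not_lt.mp hu), Set.domRestrict_apply, h_zero]
    · rw [Set.IccExtend_of_right_le _ _ (not_lt.mp hu), Set.domRestrict_apply, h_one]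

lemma fracInner_eq_zero_of_integral_mul_fracLap_eq_zero {γ : ℝ} (hγ : γ ∈ Set.Ioo 0 2)
    {Φ w : ℝ → ℝ} (hΦ : Integrable Φ unitMeasure) (hΦ_diff : MemLp (fracDiff γ Φ) 2 squareMeasure)
    (hΦ_weak : ∀ G, IsSpatialTest G → ∫ u, Φ u * fracLap γ G u ∂unitMeasure = 0)
    (hw : MemLp (fracDiff γ w) 2 squareMeasure) (hw_bdry : HasBoundaryValues w 0 0) :
    fracInner γ w Φ = 0 := by
  have h_test (G : ℝ → ℝ) (hG : IsSpatialTest G) :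
      ∫ p, fracDiff γ Φ p * fracDiff γ G p ∂squareMeasure = 0 := by
    obtain ⟨L, hL⟩ := hG.exists_lipschitzWith
    have h_inner := fracInner_eq_neg_integral_mul_fracLap ⟨by linarith [hγ.1], hγ.2⟩ hΦ hΦ_diff hG
    rw [hΦ_weak G hG, neg_zero,
      fracInner_eq_integral hΦ_diff (memLp_fracDiff_of_lipschitzWith hγ.2 hL)] at h_inner
    exact (mul_eq_zero.mp h_inner).resolve_left (half_pos (cGamma_pos hγ.1)).ne'
  obtain ⟨W, hW, hwW, hW_zero⟩ := hw_bdry.exists_continuous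
  have h_diff := fracDiff_congr_ae γ hwW
  rw [fracInner_eq_integral hw hΦ_diff]
  refine mul_eq_zero_of_right _ ?_
  calc ∫ p, fracDiff γ w p * fracDiff γ Φ p ∂squareMeasure
      = ∫ p, fracDiff γ Φ p * fracDiff γ W p ∂squareMeasure := by
        refine integral_congr_ae ?_
        filter_upwards [h_diff] with p hp
        rw [hp, mul_comm]
    _ = 0 := integral_mul_fracDiff_eq_zero_of_notMem_Ioo (by linarith [hγ.1]) hΦ_diff h_test hW
        (hw.ae_eq h_diff) hW_zero

theorem stationary_orthogonality_general {γ : ℝ} (hγ : γ ∈ Set.Ioo 0 2) {Φ ρ : ℝ → ℝ}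
    (hΦ : MemHgamma γ Φ)
    (hΦ_weak : ∀ G, IsSpatialTest G → ∫ u, Φ u * fracLap γ G u ∂unitMeasure = 0)
    (hρ : MemHgamma γ ρ) (h_bdry : HasBoundaryValues (fun u ↦ ρ u - Φ u) 0 0) :
    fracInner γ (fun u ↦ ρ u - Φ u) (fun u ↦ ρ u - Φ u) -
      fracInner γ (fun u ↦ ρ u - Φ u) ρ = 0 := by
  have hΦ_diff := hΦ.memLp_fracDiff hγ.1
  have hρ_diff := hρ.memLp_fracDiff hγ.1
  have hw_diff : MemLp (fracDiff γ fun u ↦ ρ u - Φ u) 2 squareMeasure :=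
    fracDiff_sub γ ρ Φ ▸ hρ_diff.sub hΦ_diff
  have h_orth : fracInner γ (fun u ↦ ρ u - Φ u) Φ = 0 :=
    fracInner_eq_zero_of_integral_mul_fracLap_eq_zero hγ hΦ.integrable hΦ_diff hΦ_weak hw_diff
      h_bdry
  rw [fracInner_sub_right hw_diff hρ_diff hΦ_diff, h_orth]
  ring

/-- For any `ρ ∈ H^{γ/2}` whose continuous representative takes the
boundary values `Φl` at `0` and `Φr` at `1`,
`‖ρ − Φss‖²_{γ/2} − ⟨ρ − Φss, ρ⟩_{γ/2} = 0`. -/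
theorem stationary_orthogonality
    (γ Φl Φr : ℝ) (hγ : γ ∈ Set.Ioo (1:ℝ) 2)
    (Φss : ℝ → ℝ) (hss : IsStationarySolution γ Φl Φr Φss)
    (ρ : ℝ → ℝ) (hρ : MemHgamma γ ρ) (hbv : HasBoundaryValues ρ Φl Φr) :
    fracInner γ (fun u => ρ u - Φss u) (fun u => ρ u - Φss u)
      - fracInner γ (fun u => ρ u - Φss u) ρ = 0 := by
  obtain ⟨hss_mem, hss_bdry, hss_weak⟩ := hss
  have h_bdry : HasBoundaryValues (fun u ↦ ρ u - Φss u) 0 0 := by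
    simpa only [sub_self] using hbv.sub hss_bdry
  exact stationary_orthogonality_general ⟨one_pos.trans hγ.1, hγ.2⟩ hss_mem hss_weak hρ h_bdry
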